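/- For all real y with y ∈ [−1,1] and y ≠ 0, and all real x: 1 + (sinh(x)/y)² ≤ exp((x/y)²). -/

import Mathlib

/-!
Set `p = 1 / y ^ 2 ≥ 1`. At `p = 1` the inequality is `cosh x ^ 2 ≤ exp (x ^ 2)`, and Bernoulli's
inequality `1 + p * a ≤ (1 + a) ^ p`, with `1 + a = exp (x ^ 2)`, carries it to every `p ≥ 1`.
-/

theorem sinh_sq_le_exp_sq_sub_one (x : ℝ) : Real.sinh x ^ 2 ≤ Real.exp (x ^ 2) - 1 := by
  have cosh_sq_le : Real.cosh x ^ 2 ≤ Real.exp (x ^ 2) :=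
    calc Real.cosh x ^ 2
      _ ≤ Real.exp (x ^ 2 / 2) ^ 2 := by
        gcongr
        exact Real.cosh_le_exp_half_sq x
      _ = Real.exp (x ^ 2) := by
        rw [← Real.exp_nat_mul, Nat.cast_ofNat, mul_div_cancel₀ _ two_ne_zero]
  rw [Real.sinh_sq]
  gcongr

theorem one_add_mul_exp_sub_one_le_exp_mul {p : ℝ} (hp : 1 ≤ p) (t : ℝ) :
    1 + p * (Real.exp t - 1) ≤ Real.exp (p * t) :=
  calc 1 + p * (Real.exp t - 1)
    _ ≤ (1 + (Real.exp t - 1)) ^ p :=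
      one_add_mul_self_le_rpow_one_add (by linarith [Real.exp_pos t]) hp
    _ = Real.exp (p * t) := by rw [add_sub_cancel, ← Real.exp_mul, mul_comm]

/-- **Lemma.** For `y ∈ [−1,1]`, `y ≠ 0`, and any real `x`:
`1 + (sinh x / y)² ≤ exp((x/y)²)`. -/
theorem one_add_sinh_div_sq_le_exp (y : ℝ) (hy : y ∈ Set.Icc (-1 : ℝ) 1) (hy0 : y ≠ 0)
    (x : ℝ) :
    1 + (Real.sinh x / y) ^ 2 ≤ Real.exp ((x / y) ^ 2) := by
  have one_le_inv_sq : 1 ≤ (y ^ 2)⁻¹ :=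
    (one_le_inv₀ (by positivity)).2 ((sq_le_one_iff_abs_le_one y).2 (abs_le.2 hy))
  calc 1 + (Real.sinh x / y) ^ 2
    _ = 1 + (y ^ 2)⁻¹ * Real.sinh x ^ 2 := by rw [div_pow, div_eq_inv_mul]
    _ ≤ 1 + (y ^ 2)⁻¹ * (Real.exp (x ^ 2) - 1) := by
      gcongr
      exact sinh_sq_le_exp_sq_sub_one x
    _ ≤ Real.exp ((y ^ 2)⁻¹ * x ^ 2) := one_add_mul_exp_sub_one_le_exp_mul one_le_inv_sq _
    _ = Real.exp ((x / y) ^ 2) := by rw [div_pow, div_eq_inv_mul]
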